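/- arXiv:0711.4229 — 5 statements merged into one kernel-verified Lean document; each statement's English description precedes it below -/
import Mathlib

section
/- Let V be an object of C. Then for every endomorphism f of V ⊗ V one has tr_R(f) = tr_L(c_{V,V}^{-1} ∘ f ∘ c_{V,V}). -/
open CategoryTheory MonoidalCategory

namespace RibbonPaper

/-- A twist (balancing/ribbon structure) on a braided category with right duals:
a natural family of isomorphisms `θ V : V ⟶ V` satisfying
`θ (V ⊗ W) = c_{W,V} ∘ c_{V,W} ∘ (θ V ⊗ θ W)` and `θ (Vᘁ) = (θ V)ᘁ`. -/
structure Twist (C : Type*) [Category C] [MonoidalCategory C] [BraidedCategory C]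
    [RightRigidCategory C] where
  θ : ∀ V : C, V ⟶ V
  isIso : ∀ V : C, IsIso (θ V)
  natural : ∀ {V W : C} (f : V ⟶ W), f ≫ θ W = θ V ≫ f
  tensor : ∀ V W : C, θ (V ⊗ W) = (θ V ⊗ₘ θ W) ≫ (β_ V W).hom ≫ (β_ W V).hom
  dual : ∀ V : C, θ (Vᘁ) = (θ V)ᘁ

variable {C : Type*} [Category C] [MonoidalCategory C] [BraidedCategory C]
  [Preadditive C] [MonoidalPreadditive C] [RightRigidCategory C]

variable (T : Twist C)

/-- The modified evaluation `d'_V := d_V ∘ c_{V,V*} ∘ (θ_V ⊗ id_{V*})`. -/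
def dP (V : C) : V ⊗ Vᘁ ⟶ 𝟙_ C :=
  (T.θ V ⊗ₘ 𝟙 (Vᘁ)) ≫ (β_ V (Vᘁ)).hom ≫ ε_ V (Vᘁ)

/-- The modified coevaluation `b'_V := (id_{V*} ⊗ θ_V) ∘ c_{V,V*} ∘ b_V`. -/
def bP (V : C) : 𝟙_ C ⟶ Vᘁ ⊗ V :=
  η_ V (Vᘁ) ≫ (β_ V (Vᘁ)).hom ≫ (𝟙 (Vᘁ) ⊗ₘ T.θ V)

/-- The partial right trace `⟨f⟩_R`-endomorphism:
`(id_U ⊗ d'_V) ∘ (f ⊗ id_{V*}) ∘ (id_U ⊗ b_V) : U ⟶ U`. -/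
def ptrR {U V : C} (f : U ⊗ V ⟶ U ⊗ V) : U ⟶ U :=
  (ρ_ U).inv ≫ (U ◁ η_ V (Vᘁ)) ≫ (α_ U V (Vᘁ)).inv ≫ (f ▷ (Vᘁ)) ≫
    (α_ U V (Vᘁ)).hom ≫ (U ◁ dP T V) ≫ (ρ_ U).hom

/-- The partial left trace `⟨f⟩_L`-endomorphism:
`(d_U ⊗ id_V) ∘ (id_{U*} ⊗ f) ∘ (b'_U ⊗ id_V) : V ⟶ V`. -/
def ptrL {U V : C} (f : U ⊗ V ⟶ U ⊗ V) : V ⟶ V :=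
  (λ_ V).inv ≫ (bP T U ▷ V) ≫ (α_ (Uᘁ) U V).hom ≫ ((Uᘁ) ◁ f) ≫
    (α_ (Uᘁ) U V).inv ≫ (ε_ U (Uᘁ) ▷ V) ≫ (λ_ V).hom

/-- An object `V` is ambidextrous if `tr_L f = tr_R f` for all `f : V ⊗ V ⟶ V ⊗ V`. -/
def Ambidextrous (V : C) : Prop := ∀ f : V ⊗ V ⟶ V ⊗ V, ptrL T f = ptrR T f

/-- The categorical trace `tr_C(f) := d'_V ∘ (f ⊗ id_{V*}) ∘ b_V ∈ K = End(𝟙)`. -/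
def trC {V : C} (f : V ⟶ V) : 𝟙_ C ⟶ 𝟙_ C :=
  η_ V (Vᘁ) ≫ (f ▷ (Vᘁ)) ≫ dP T V

/-- The categorical (quantum) dimension `dim V := tr_C(id_V)`. -/
def qdim (V : C) : 𝟙_ C ⟶ 𝟙_ C := trC T (𝟙 V)

/-- The action of `K = End(𝟙)` on Hom-groups: `k • f := k ⊗ f` (up to unitors). -/
def smul {V W : C} (k : 𝟙_ C ⟶ 𝟙_ C) (f : V ⟶ W) : V ⟶ W :=
  (λ_ V).inv ≫ (k ⊗ₘ f) ≫ (λ_ W).hom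

/-- `V` is simple if `End(V) = K ⋅ id_V`. -/
def IsSimple (V : C) : Prop := ∀ f : V ⟶ V, ∃ k : 𝟙_ C ⟶ 𝟙_ C, f = smul k (𝟙 V)

/-- The endomorphism of `Y` computing `S'(X,Y)`:
`(id_Y ⊗ d'_X) ∘ ((c_{X,Y} ∘ c_{Y,X}) ⊗ id_{X*}) ∘ (id_Y ⊗ b_X)`. -/
def SMap (X Y : C) : Y ⟶ Y := ptrR T ((β_ Y X).hom ≫ (β_ X Y).hom)

/-- `V ∈ A(J)`: `V` is simple and `S'(J,V) ≠ 0`. -/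
def InA (J V : C) : Prop :=
  IsSimple V ∧ ∃ s : 𝟙_ C ⟶ 𝟙_ C, SMap T J V = smul s (𝟙 V) ∧ s ≠ 0

/-!
Pull the arc that closes the strand `V` of `f` on the right across `U` to the left side. By
naturality of the braiding this only conjugates `f` by the braiding. The arc gets turned over:
since `θ_𝟙 = 𝟙`, the map `θ_{V ⊗ Vᘁ}` acts trivially on `b_V`, so `b_V` is `b'_V` turned over with
an extra `θ_{Vᘁ}` on the strand `Vᘁ`. This `θ_{Vᘁ}` slides past `f` and, as `θ_{Vᘁ ⊗ V}` acts
trivially on `d_V`, makes `d'_V` turned over equal to `d_V`.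
-/

section Closure

variable {D : Type*} [Category D] [MonoidalCategory D]

/-- The right closure of a morphism `f`: its right-hand strand is bent back into a strand on the
right by an arbitrary pair `s`, `e`, which need not be a duality. -/
def closeRight {U U' V V' X : D} (s : 𝟙_ D ⟶ V ⊗ X) (e : V' ⊗ X ⟶ 𝟙_ D)
    (f : U ⊗ V ⟶ U' ⊗ V') : U ⟶ U' :=
  (ρ_ U).inv ≫ U ◁ s ≫ (α_ U V X).inv ≫ f ▷ X ≫ (α_ U' V' X).hom ≫ U' ◁ e ≫ (ρ_ U').hom

/-- The left closure of a morphism `f`: the mirror image of `closeRight`, bending back the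
left-hand strand of `f` on the left. -/
def closeLeft {U U' V V' X : D} (s : 𝟙_ D ⟶ X ⊗ V) (e : X ⊗ V' ⟶ 𝟙_ D)
    (f : V ⊗ U ⟶ V' ⊗ U') : U ⟶ U' :=
  (λ_ U).inv ≫ s ▷ U ≫ (α_ X V U).hom ≫ X ◁ f ≫ (α_ X V' U').inv ≫ e ▷ U' ≫ (λ_ U').hom

theorem closeRight_comp_whiskerLeft {U U' V V' X Y : D} (s : 𝟙_ D ⟶ V ⊗ X) (g : X ⟶ Y)
    (e : V' ⊗ Y ⟶ 𝟙_ D) (f : U ⊗ V ⟶ U' ⊗ V') :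
    closeRight (s ≫ V ◁ g) e f = closeRight s (V' ◁ g ≫ e) f := by
  have interchange : U ◁ V ◁ g ≫ (α_ U V Y).inv ≫ f ▷ Y ≫ (α_ U' V' Y).hom =
      (α_ U V X).inv ≫ f ▷ X ≫ (α_ U' V' X).hom ≫ U' ◁ V' ◁ g := by
    rw [associator_inv_naturality_right_assoc, whisker_exchange_assoc,
      associator_naturality_right]
  simp only [closeRight, whiskerLeft_comp, Category.assoc, reassoc_of% interchange]

variable [BraidedCategory D]

theorem leftUnitor_inv_whiskerRight_braiding {A : D} (U : D) (s : 𝟙_ D ⟶ A) :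
    (λ_ U).inv ≫ s ▷ U ≫ (β_ A U).hom = (ρ_ U).inv ≫ U ◁ s := by
  rw [BraidedCategory.braiding_naturality_left, leftUnitor_inv_braiding_assoc]

theorem braiding_whiskerLeft_rightUnitor {A : D} (U : D) (e : A ⟶ 𝟙_ D) :
    (β_ A U).hom ≫ U ◁ e ≫ (ρ_ U).hom = e ▷ U ≫ (λ_ U).hom := by
  rw [← BraidedCategory.braiding_naturality_left_assoc, braiding_rightUnitor]

theorem braiding_tensor_left_comp_whiskerLeft_braiding (X V U : D) :
    (β_ (X ⊗ V) U).hom ≫ U ◁ (β_ X V).hom =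
      (α_ X V U).hom ≫ X ◁ (β_ V U).hom ≫ (β_ X (U ⊗ V)).hom ≫ (α_ U V X).hom := by
  simp only [BraidedCategory.braiding_tensor_left_hom, BraidedCategory.braiding_tensor_right_hom,
    Category.assoc, Iso.inv_hom_id, Category.comp_id]

theorem whiskerLeft_conj_braiding_comp_braiding {U U' V V' : D} (X : D) (f : U ⊗ V ⟶ U' ⊗ V') :
    (α_ X V U).hom ≫ X ◁ ((β_ V U).hom ≫ f ≫ (β_ V' U').inv) ≫ (α_ X V' U').inv ≫
        (β_ (X ⊗ V') U').hom ≫ U' ◁ (β_ X V').hom =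
      (β_ (X ⊗ V) U).hom ≫ U ◁ (β_ X V).hom ≫ (α_ U V X).inv ≫ f ▷ X ≫ (α_ U' V' X).hom := by
  calc
    _ = (α_ X V U).hom ≫ X ◁ (β_ V U).hom ≫ X ◁ f ≫ (β_ X (U' ⊗ V')).hom ≫ (α_ U' V' X).hom := by
      simp only [braiding_tensor_left_comp_whiskerLeft_braiding, Iso.inv_hom_id_assoc,
        whiskerLeft_comp, Category.assoc, whiskerLeft_inv_hom_assoc]
    _ = (α_ X V U).hom ≫ X ◁ (β_ V U).hom ≫ (β_ X (U ⊗ V)).hom ≫ f ▷ X ≫ (α_ U' V' X).hom := by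
      rw [BraidedCategory.braiding_naturality_right_assoc]
    _ = _ := by
      rw [reassoc_of% braiding_tensor_left_comp_whiskerLeft_braiding X V U,
        Iso.hom_inv_id_assoc]

theorem closeRight_braiding {U U' V V' X : D} (s : 𝟙_ D ⟶ X ⊗ V) (e : V' ⊗ X ⟶ 𝟙_ D)
    (f : U ⊗ V ⟶ U' ⊗ V') :
    closeRight (s ≫ (β_ X V).hom) e f =
      closeLeft s ((β_ X V').hom ≫ e) ((β_ V U).hom ≫ f ≫ (β_ V' U').inv) := by
  rw [closeLeft, ← braiding_whiskerLeft_rightUnitor, whiskerLeft_comp U', Category.assoc,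
    reassoc_of% whiskerLeft_conj_braiding_comp_braiding X f,
    reassoc_of% leftUnitor_inv_whiskerRight_braiding U s]
  simp only [closeRight, whiskerLeft_comp, Category.assoc]

end Closure

section Traces

omit [Preadditive C] [MonoidalPreadditive C]

namespace Twist

theorem θ_unit : T.θ (𝟙_ C) = 𝟙 (𝟙_ C) := by
  have := T.isIso (𝟙_ C)
  have θ_comp_θ : T.θ (𝟙_ C) ≫ T.θ (𝟙_ C) = T.θ (𝟙_ C) := by
    have h := T.natural (λ_ (𝟙_ C)).hom
    rw [T.tensor, Category.assoc, Category.assoc, braiding_leftUnitor, braiding_rightUnitor,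
      MonoidalCategory.tensorHom_def', Category.assoc, unitors_equal, rightUnitor_naturality,
      ← unitors_equal, leftUnitor_naturality_assoc, cancel_epi] at h
    exact h.symm
  exact (cancel_epi (T.θ (𝟙_ C))).mp (by rw [θ_comp_θ, Category.comp_id])

theorem from_unit_comp_θ {X : C} (s : 𝟙_ C ⟶ X) : s ≫ T.θ X = s := by
  rw [T.natural, T.θ_unit, Category.id_comp]

theorem θ_comp_to_unit {X : C} (e : X ⟶ 𝟙_ C) : T.θ X ≫ e = e := by
  rw [← T.natural, T.θ_unit, Category.comp_id]

end Twist

theorem bP_braiding_θ (V : C) :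
    (bP T V ≫ (β_ (Vᘁ) V).hom) ≫ V ◁ T.θ (Vᘁ) = η_ V (Vᘁ) := by
  calc
    _ = η_ V (Vᘁ) ≫ (T.θ V ⊗ₘ T.θ (Vᘁ)) ≫ (β_ V (Vᘁ)).hom ≫ (β_ (Vᘁ) V).hom := by
      simp [bP, MonoidalCategory.tensorHom_def]
    _ = η_ V (Vᘁ) := by rw [← T.tensor, T.from_unit_comp_θ]

theorem braiding_θ_dP (V : C) : (β_ (Vᘁ) V).hom ≫ V ◁ T.θ (Vᘁ) ≫ dP T V = ε_ V (Vᘁ) := by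
  calc
    _ = ((T.θ (Vᘁ) ⊗ₘ T.θ V) ≫ (β_ (Vᘁ) V).hom ≫ (β_ V (Vᘁ)).hom) ≫ ε_ V (Vᘁ) := by
      simp [dP, MonoidalCategory.tensorHom_def]
    _ = ε_ V (Vᘁ) := by rw [← T.tensor, T.θ_comp_to_unit]

theorem statement0_general {U V : C} (f : U ⊗ V ⟶ U ⊗ V) :
    ptrR T f = ptrL T ((β_ V U).hom ≫ f ≫ (β_ V U).inv) :=
  calc
    ptrR T f = closeRight (η_ V (Vᘁ)) (dP T V) f := rfl
    _ = closeRight ((bP T V ≫ (β_ (Vᘁ) V).hom) ≫ V ◁ T.θ (Vᘁ)) (dP T V) f := by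
      rw [bP_braiding_θ]
    _ = closeRight (bP T V ≫ (β_ (Vᘁ) V).hom) (V ◁ T.θ (Vᘁ) ≫ dP T V) f :=
      closeRight_comp_whiskerLeft ..
    _ = closeLeft (bP T V) ((β_ (Vᘁ) V).hom ≫ V ◁ T.θ (Vᘁ) ≫ dP T V)
          ((β_ V U).hom ≫ f ≫ (β_ V U).inv) := closeRight_braiding ..
    _ = closeLeft (bP T V) (ε_ V (Vᘁ)) ((β_ V U).hom ≫ f ≫ (β_ V U).inv) := by
      rw [braiding_θ_dP]
    _ = ptrL T ((β_ V U).hom ≫ f ≫ (β_ V U).inv) := rfl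

end Traces

/-- For every object `V` and every `f : V ⊗ V ⟶ V ⊗ V`,
`tr_R(f) = tr_L(c_{V,V}⁻¹ ∘ f ∘ c_{V,V})`. -/
theorem statement0 (V : C) (f : V ⊗ V ⟶ V ⊗ V) :
    ptrR T f = ptrL T ((β_ V V).hom ≫ f ≫ (β_ V V).inv) :=
  statement0_general T f

end RibbonPaper
end

section
/- If J is an object of C such that the braiding c_{J,J} commutes with every element of End(J ⊗ J), then J is ambidextrous. -/
open CategoryTheory MonoidalCategory

namespace RibbonPaper

variable {C : Type*} [Category C] [MonoidalCategory C] [BraidedCategory C]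
  [Preadditive C] [MonoidalPreadditive C] [RightRigidCategory C]

variable (T : Twist C)

/-!
Since `θ_𝟙 = id`, naturality of the twist at `d_U` and `b_U` gives `d_U = d'_U ∘ c ∘ (θ_{U*} ⊗ id)`
and `(θ_{U*} ⊗ id) ∘ b'_U = c⁻¹ ∘ b_U`. Sliding `θ_{U*}` along the strand `U*` from the first to the
second therefore closes up `f` on the left with the data `b_U`, `d'_U` of the right trace, and
pulling the strand `U*` across `V` by naturality of the braiding turns `tr_L f` into
`tr_R (c ∘ f ∘ c⁻¹)`. The braidings cancel when `f` commutes with `c`.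
-/

section

omit [Preadditive C] [MonoidalPreadditive C]

section Contraction

omit [RightRigidCategory C]

/-- The left contraction of `f` along a copairing `a` and a pairing `e`, which closes up the left
tensor factor of `f`. The left partial trace is the case `a = b'_U`, `e = d_U`; no duality between
`X` and `U` is assumed, so that twists and braidings can be moved in and out of `a` and `e`. -/
def leftContraction {X U U' V V' : C} (a : 𝟙_ C ⟶ X ⊗ U) (e : X ⊗ U' ⟶ 𝟙_ C)
    (f : U ⊗ V ⟶ U' ⊗ V') : V ⟶ V' :=
  (λ_ V).inv ≫ a ▷ V ≫ (α_ X U V).hom ≫ X ◁ f ≫ (α_ X U' V').inv ≫ e ▷ V' ≫ (λ_ V').hom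

/-- The right contraction of `f` along a copairing `a` and a pairing `e`, which closes up the right
tensor factor of `f`. The right partial trace is the case `a = b_U`, `e = d'_U`. -/
def rightContraction {X U U' V V' : C} (a : 𝟙_ C ⟶ U ⊗ X) (e : U' ⊗ X ⟶ 𝟙_ C)
    (f : V ⊗ U ⟶ V' ⊗ U') : V ⟶ V' :=
  (ρ_ V).inv ≫ V ◁ a ≫ (α_ V U X).inv ≫ f ▷ X ≫ (α_ V' U' X).hom ≫ V' ◁ e ≫ (ρ_ V').hom

omit [BraidedCategory C] in
lemma leftContraction_comp_whiskerRight {X X' U U' V V' : C} (a : 𝟙_ C ⟶ X ⊗ U) (t : X ⟶ X')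
    (e : X' ⊗ U' ⟶ 𝟙_ C) (f : U ⊗ V ⟶ U' ⊗ V') :
    leftContraction (a ≫ t ▷ U) e f = leftContraction a (t ▷ U' ≫ e) f := by
  simp only [leftContraction, comp_whiskerRight, Category.assoc]
  rw [associator_naturality_left_assoc, ← whisker_exchange_assoc,
    associator_inv_naturality_left_assoc]

lemma whiskerLeft_copairing_comp_braiding_inv {U X : C} (V : C) (a : 𝟙_ C ⟶ U ⊗ X) :
    (ρ_ V).inv ≫ V ◁ a ≫ (α_ V U X).inv ≫ (β_ U V).inv ▷ X =
      (λ_ V).inv ≫ a ▷ V ≫ (α_ U X V).hom ≫ U ◁ (β_ X V).hom ≫ (α_ U V X).inv := by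
  have slide : (λ_ V).inv ≫ a ▷ V ≫ (β_ (U ⊗ X) V).hom = (ρ_ V).inv ≫ V ◁ a := by
    rw [BraidedCategory.braiding_naturality_left, braiding_tensorUnit_left]
    simp
  rw [← reassoc_of% slide, BraidedCategory.braiding_tensor_left_hom]
  simp

lemma braiding_hom_comp_whiskerLeft_pairing {U X : C} (V : C) (e : U ⊗ X ⟶ 𝟙_ C) :
    (β_ U V).hom ▷ X ≫ (α_ V U X).hom ≫ V ◁ e ≫ (ρ_ V).hom =
      (α_ U V X).hom ≫ U ◁ (β_ X V).inv ≫ (α_ U X V).inv ≫ e ▷ V ≫ (λ_ V).hom := by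
  have slide : (β_ (U ⊗ X) V).hom ≫ V ◁ e ≫ (ρ_ V).hom = e ▷ V ≫ (λ_ V).hom := by
    rw [← BraidedCategory.braiding_naturality_left_assoc, braiding_tensorUnit_left]
    simp
  rw [← slide, BraidedCategory.braiding_tensor_left_hom]
  simp

lemma braiding_conj_whiskerRight {U U' V V' : C} (X : C) (f : U ⊗ V ⟶ U' ⊗ V') :
    (α_ U X V).hom ≫ U ◁ (β_ X V).hom ≫ (α_ U V X).inv ≫ f ▷ X ≫
        (α_ U' V' X).hom ≫ U' ◁ (β_ X V').inv ≫ (α_ U' X V').inv =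
      (β_ X U).inv ▷ V ≫ (α_ X U V).hom ≫ X ◁ f ≫ (α_ X U' V').inv ≫ (β_ X U').hom ▷ V' := by
  have slide : f ▷ X = (β_ X (U ⊗ V)).inv ≫ X ◁ f ≫ (β_ X (U' ⊗ V')).hom := by
    rw [Iso.eq_inv_comp, BraidedCategory.braiding_naturality_right]
  rw [slide, BraidedCategory.braiding_tensor_right_hom, BraidedCategory.braiding_tensor_right_inv]
  simp

lemma rightContraction_braiding_conj {X U U' V V' : C} (a : 𝟙_ C ⟶ U ⊗ X) (e : U' ⊗ X ⟶ 𝟙_ C)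
    (f : U ⊗ V ⟶ U' ⊗ V') :
    rightContraction a e ((β_ U V).inv ≫ f ≫ (β_ U' V').hom) =
      leftContraction (a ≫ (β_ X U).inv) ((β_ X U').hom ≫ e) f := by
  simp only [rightContraction, leftContraction, comp_whiskerRight, Category.assoc]
  rw [braiding_hom_comp_whiskerLeft_pairing, reassoc_of% whiskerLeft_copairing_comp_braiding_inv,
    reassoc_of% braiding_conj_whiskerRight]

end Contraction

lemma Twist.θ_tensorUnit : T.θ (𝟙_ C) = 𝟙 (𝟙_ C) := by
  have := T.isIso (𝟙_ C)
  have idem : T.θ (𝟙_ C) ≫ T.θ (𝟙_ C) = T.θ (𝟙_ C) := by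
    have nat := T.natural (λ_ (𝟙_ C)).hom
    rw [T.tensor] at nat
    simpa [← unitors_equal, ← unitors_inv_equal, MonoidalCategory.tensorHom_def] using nat.symm
  rwa [← cancel_epi (T.θ (𝟙_ C)), Category.comp_id]

lemma bP_comp_θ_whiskerRight (U : C) :
    bP T U ≫ T.θ (Uᘁ) ▷ U = η_ U (Uᘁ) ≫ (β_ (Uᘁ) U).inv := by
  have nat := T.natural (η_ U (Uᘁ))
  rw [T.θ_tensorUnit, Category.id_comp, T.tensor] at nat
  rw [Iso.eq_comp_inv, ← nat]
  simp [bP, MonoidalCategory.tensorHom_def]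

lemma θ_whiskerRight_comp_braiding_comp_dP (U : C) :
    T.θ (Uᘁ) ▷ U ≫ (β_ (Uᘁ) U).hom ≫ dP T U = ε_ U (Uᘁ) := by
  have nat := T.natural (ε_ U (Uᘁ))
  rw [T.θ_tensorUnit, Category.comp_id, T.tensor] at nat
  rw [nat]
  simp [dP, MonoidalCategory.tensorHom_def]

lemma ptrL_eq_ptrR_braiding_conj {U V : C} (f : U ⊗ V ⟶ U ⊗ V) :
    ptrL T f = ptrR T ((β_ U V).inv ≫ f ≫ (β_ U V).hom) :=
  calc
    ptrL T f = leftContraction (bP T U) (ε_ U (Uᘁ)) f := rfl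
    _ = leftContraction (bP T U) (T.θ (Uᘁ) ▷ U ≫ (β_ (Uᘁ) U).hom ≫ dP T U) f := by
      rw [θ_whiskerRight_comp_braiding_comp_dP]
    _ = leftContraction (bP T U ≫ T.θ (Uᘁ) ▷ U) ((β_ (Uᘁ) U).hom ≫ dP T U) f := by
      rw [leftContraction_comp_whiskerRight]
    _ = leftContraction (η_ U (Uᘁ) ≫ (β_ (Uᘁ) U).inv) ((β_ (Uᘁ) U).hom ≫ dP T U) f := by
      rw [bP_comp_θ_whiskerRight]
    _ = rightContraction (η_ U (Uᘁ)) (dP T U) ((β_ U V).inv ≫ f ≫ (β_ U V).hom) := by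
      rw [rightContraction_braiding_conj]
    _ = ptrR T ((β_ U V).inv ≫ f ≫ (β_ U V).hom) := rfl

theorem statement1_general {J : C} {f : J ⊗ J ⟶ J ⊗ J}
    (h : f ≫ (β_ J J).hom = (β_ J J).hom ≫ f) : ptrL T f = ptrR T f := by
  rw [ptrL_eq_ptrR_braiding_conj, h, Iso.inv_hom_id_assoc]

end

/-- If the braiding `c_{J,J}` commutes with every endomorphism of
`J ⊗ J`, then `J` is ambidextrous. -/
theorem statement1 (J : C)
    (h : ∀ g : J ⊗ J ⟶ J ⊗ J, g ≫ (β_ J J).hom = (β_ J J).hom ≫ g) :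
    Ambidextrous T J :=
  fun f => statement1_general T (h f)

end RibbonPaper
end

section
/- If J is a simple object of C with dim(J) ≠ 0, then J is ambidextrous. -/
open CategoryTheory MonoidalCategory

namespace RibbonPaper

variable {C : Type*} [Category C] [MonoidalCategory C] [BraidedCategory C]
  [Preadditive C] [MonoidalPreadditive C] [RightRigidCategory C]

variable (T : Twist C)

/-!
Closing up both strands of `f : U ⊗ V ⟶ U ⊗ V` gives one scalar, whichever strand is closed
first, so `ptrL T f` and `ptrR T f` have the same categorical trace. On a simple object `J` the
trace of `k • id` is `k * dim J`, so when `dim J` is cancellable the trace determines an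
endomorphism of `J`, and the two partial traces coincide.
-/

section Closure

variable {D : Type*} [Category D] [MonoidalCategory D]

/-- The left closure `(e ⊗ id) ∘ (id ⊗ f) ∘ (b ⊗ id)` of a morphism along an arbitrary cup `b`
and cap `e`; `ptrL` is the case of the cup `bP T U` and the evaluation. -/
def leftClosure {A U U' V V' : D} (b : 𝟙_ D ⟶ A ⊗ U) (e : A ⊗ U' ⟶ 𝟙_ D)
    (f : U ⊗ V ⟶ U' ⊗ V') : V ⟶ V' :=
  (λ_ V).inv ≫ b ▷ V ≫ (α_ A U V).hom ≫ A ◁ f ≫ (α_ A U' V').inv ≫ e ▷ V' ≫ (λ_ V').hom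

/-- The right closure `(id ⊗ e) ∘ (f ⊗ id) ∘ (id ⊗ b)` of a morphism along an arbitrary cup `b`
and cap `e`; `ptrR` is the case of the coevaluation and the cap `dP T V`. -/
def rightClosure {B U U' V V' : D} (b : 𝟙_ D ⟶ V ⊗ B) (e : V' ⊗ B ⟶ 𝟙_ D)
    (f : U ⊗ V ⟶ U' ⊗ V') : U ⟶ U' :=
  (ρ_ U).inv ≫ U ◁ b ≫ (α_ U V B).inv ≫ f ▷ B ≫ (α_ U' V' B).hom ≫ U' ◁ e ≫ (ρ_ U').hom

lemma comp_leftClosure_comp_eq_comp_rightClosure_comp {A B U U' V V' : D}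
    (b : 𝟙_ D ⟶ A ⊗ U) (e : A ⊗ U' ⟶ 𝟙_ D) (b' : 𝟙_ D ⟶ V ⊗ B) (e' : V' ⊗ B ⟶ 𝟙_ D)
    (f : U ⊗ V ⟶ U' ⊗ V') :
    b' ≫ leftClosure b e f ▷ B ≫ e' = b ≫ A ◁ rightClosure b' e' f ≫ e := by
  -- The cups `b`, `b'` occupy different strands, as do the caps, so their heights can be exchanged.
  calc
    _ = 𝟙 _ ⊗≫ (𝟙_ D ◁ b' ≫ b ▷ (V ⊗ B)) ⊗≫ A ◁ f ▷ B ⊗≫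
          (e ▷ (V' ⊗ B) ≫ 𝟙_ D ◁ e') ⊗≫ 𝟙 _ := by
      dsimp only [leftClosure]; monoidal
    _ = 𝟙 _ ⊗≫ (b ▷ 𝟙_ D ≫ (A ⊗ U) ◁ b') ⊗≫ A ◁ f ▷ B ⊗≫
          ((A ⊗ U') ◁ e' ≫ e ▷ 𝟙_ D) ⊗≫ 𝟙 _ := by
      rw [whisker_exchange, whisker_exchange]
    _ = _ := by
      dsimp only [rightClosure]; monoidal

end Closure

section Trace

omit [Preadditive C] [MonoidalPreadditive C]

lemma trC_eq_bP_comp_whiskerLeft_comp_evaluation {V : C} (f : V ⟶ V) :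
    trC T f = bP T V ≫ Vᘁ ◁ f ≫ ε_ V (Vᘁ) := by
  calc
    trC T f = η_ V (Vᘁ) ≫ (f ≫ T.θ V) ▷ Vᘁ ≫ (β_ V (Vᘁ)).hom ≫ ε_ V (Vᘁ) := by
      simp only [trC, dP, tensorHom_id, comp_whiskerRight, Category.assoc]
    _ = η_ V (Vᘁ) ≫ (β_ V (Vᘁ)).hom ≫ Vᘁ ◁ (T.θ V ≫ f) ≫ ε_ V (Vᘁ) := by
      rw [T.natural, BraidedCategory.braiding_naturality_left_assoc]
    _ = bP T V ≫ Vᘁ ◁ f ≫ ε_ V (Vᘁ) := by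
      simp only [bP, id_tensorHom, whiskerLeft_comp, Category.assoc]

lemma trC_ptrL_eq_trC_ptrR {U V : C} (f : U ⊗ V ⟶ U ⊗ V) :
    trC T (ptrL T f) = trC T (ptrR T f) := by
  rw [trC_eq_bP_comp_whiskerLeft_comp_evaluation T (ptrR T f)]
  exact comp_leftClosure_comp_eq_comp_rightClosure_comp (bP T U) (ε_ U (Uᘁ)) (η_ V (Vᘁ)) (dP T V) f

lemma trC_smul {V : C} (k : 𝟙_ C ⟶ 𝟙_ C) (f : V ⟶ V) : trC T (smul k f) = k ≫ trC T f := by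
  calc
    trC T (smul k f) = 𝟙 _ ⊗≫ (𝟙_ C ◁ η_ V (Vᘁ) ≫ k ▷ (V ⊗ Vᘁ)) ⊗≫ f ▷ Vᘁ ≫ dP T V := by
      simp only [trC, smul, MonoidalCategory.tensorHom_def]; monoidal
    _ = 𝟙 _ ⊗≫ (k ▷ 𝟙_ C ≫ 𝟙_ C ◁ η_ V (Vᘁ)) ⊗≫ f ▷ Vᘁ ≫ dP T V := by
      rw [whisker_exchange]
    _ = k ≫ trC T f := by
      dsimp only [trC]; monoidal

lemma trC_injective_of_isSimple {V : C} (hV : IsSimple V)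
    (hdim : ∀ a b : 𝟙_ C ⟶ 𝟙_ C, a ≫ qdim T V = b ≫ qdim T V → a = b) :
    Function.Injective (trC T : (V ⟶ V) → (𝟙_ C ⟶ 𝟙_ C)) := by
  intro f g hfg
  obtain ⟨a, rfl⟩ := hV f
  obtain ⟨b, rfl⟩ := hV g
  rw [trC_smul, trC_smul] at hfg
  rw [hdim a b hfg]

lemma ambidextrous_of_trC_injective {V : C}
    (hV : Function.Injective (trC T : (V ⟶ V) → (𝟙_ C ⟶ 𝟙_ C))) : Ambidextrous T V :=
  fun f => hV (trC_ptrL_eq_trC_ptrR T f)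

theorem statement2_general (J : C) (hJ : IsSimple J)
    (hdim : ∀ a b : 𝟙_ C ⟶ 𝟙_ C, a ≫ qdim T J = b ≫ qdim T J → a = b) :
    Ambidextrous T J :=
  ambidextrous_of_trC_injective T (trC_injective_of_isSimple T hJ hdim)

end Trace

/-- If `J` is simple with `dim(J) ≠ 0`, then `J` is ambidextrous.
(The ground ring `K = End(𝟙)` is assumed to be an integral domain.) -/
theorem statement2
    (hK : ∀ a b : 𝟙_ C ⟶ 𝟙_ C, a ≫ b = 0 → a = 0 ∨ b = 0)
    (J : C) (hJ : IsSimple J) (hdim : qdim T J ≠ 0) :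
    Ambidextrous T J :=
  statement2_general T J hJ fun a b h => sub_eq_zero.mp <|
    (hK _ _ (by rw [Preadditive.sub_comp, h, sub_self])).resolve_right hdim

end RibbonPaper
end

section
/- Let J be a simple ambidextrous object of C and let U, V be simple objects with S'(J,U) ≠ 0 and S'(J,V) ≠ 0 (i.e. U, V ∈ A(J)). Then S'(U,J)·S'(J,V)·dim(V) = S'(V,J)·S'(J,U)·dim(U) in K; equivalently, the modified dimension d_J(V) = d_0·S'(V,J)/S'(J,V) is proportional to the categorical dimension dim(V) on A(J). -/
open CategoryTheory MonoidalCategory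

namespace RibbonPaper

variable {C : Type*} [Category C] [MonoidalCategory C] [BraidedCategory C]
  [Preadditive C] [MonoidalPreadditive C] [RightRigidCategory C]

variable (T : Twist C)

/-!
Closing both strands of the double braiding of `X` and `Y` gives the Hopf link. Cutting open either
of its two components shows that `S'(X,Y)·dim(Y) = S'(Y,X)·dim(X)`. For `X = J` and `Y = U, V`, both
sides of the claimed identity therefore equal `S'(U,J)·S'(V,J)·dim(J)`.

The symmetry of the Hopf link comes from sliding one loop along the other by naturality of the
braiding, so the loops may be closed by any cups and caps.
-/

section BraidedMonoidal

variable {C : Type*} [Category C] [MonoidalCategory C]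

lemma tensorUnit_comp_comm (a b : 𝟙_ C ⟶ 𝟙_ C) : a ≫ b = b ≫ a := by
  have h := whisker_exchange a b
  simp only [id_whiskerLeft, whiskerRight_id, unitors_equal, unitors_inv_equal,
    Category.assoc, Iso.inv_hom_id_assoc, Iso.cancel_iso_hom_left] at h
  simpa only [← Category.assoc, Iso.cancel_iso_inv_right] using h.symm

/-- A way of closing up a strand coloured by `X`: a cup and a cap joining `X` to a returning
strand. No zigzag identity is part of the data, so the colour `returning` may be any object. -/
structure StrandClosure (X : C) where
  returning : C
  cup : 𝟙_ C ⟶ X ⊗ returning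
  cap : X ⊗ returning ⟶ 𝟙_ C

namespace StrandClosure

variable {X Y : C}

/-- The trace of an endomorphism with respect to a closure of its colour, a scalar in `End(𝟙)`. -/
def trace (c : StrandClosure X) (f : X ⟶ X) : 𝟙_ C ⟶ 𝟙_ C :=
  c.cup ≫ f ▷ c.returning ≫ c.cap

/-- The dimension attached to a closure: the value of the closed loop it forms. -/
def dim (c : StrandClosure X) : 𝟙_ C ⟶ 𝟙_ C := c.trace (𝟙 X)

/-- The right partial trace: the `Y`-strand of `f` is closed up, on the right of the others. -/
def partialTrace (c : StrandClosure Y) {W Z : C} (f : W ⊗ Y ⟶ Z ⊗ Y) : W ⟶ Z :=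
  (ρ_ W).inv ≫ W ◁ c.cup ≫ (α_ W Y c.returning).inv ≫ f ▷ c.returning ≫
    (α_ Z Y c.returning).hom ≫ Z ◁ c.cap ≫ (ρ_ Z).hom

lemma trace_smul_id (c : StrandClosure X) (k : 𝟙_ C ⟶ 𝟙_ C) :
    c.trace (smul k (𝟙 X)) = k ≫ c.dim := by
  unfold dim trace smul
  rw [tensorHom_id, id_whiskerRight, Category.id_comp]
  calc
    _ = 𝟙 _ ⊗≫ (𝟙_ C ◁ c.cup ≫ k ▷ (X ⊗ c.returning)) ⊗≫ c.cap := by monoidal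
    _ = k ≫ c.cup ≫ c.cap := by
      rw [whisker_exchange]
      monoidal

lemma comp_partialTrace (c : StrandClosure Y) {V W Z : C} (g : V ⟶ W) (f : W ⊗ Y ⟶ Z ⊗ Y) :
    g ≫ c.partialTrace f = c.partialTrace (g ▷ Y ≫ f) := by
  unfold partialTrace
  calc
    _ = 𝟙 _ ⊗≫ (g ▷ 𝟙_ C ≫ W ◁ c.cup) ⊗≫ f ▷ c.returning ⊗≫ Z ◁ c.cap ⊗≫ 𝟙 _ := by monoidal
    _ = _ := by
      rw [← whisker_exchange]
      monoidal

lemma whiskerLeft_partialTrace (c : StrandClosure Y) (V : C) {W Z : C} (f : W ⊗ Y ⟶ Z ⊗ Y) :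
    V ◁ c.partialTrace f = c.partialTrace ((α_ V W Y).hom ≫ V ◁ f ≫ (α_ V Z Y).inv) := by
  unfold partialTrace
  monoidal

end StrandClosure

variable [BraidedCategory C]

open BraidedCategory

lemma whiskerLeft_comp_braiding_whiskerRight (Y : C) {W A B : C} (g : W ⟶ A ⊗ B) :
    Y ◁ g ≫ (α_ Y A B).inv ≫ (β_ Y A).hom ▷ B =
      (β_ Y W).hom ≫ g ▷ Y ≫ (α_ A B Y).hom ≫ A ◁ (β_ Y B).inv ≫ (α_ A Y B).inv := by
  rw [← braiding_naturality_right_assoc, braiding_tensor_right_hom]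
  simp

lemma whiskerRight_comp_braiding (Y : C) {W A B : C} (g : W ⟶ A ⊗ B) :
    g ▷ Y ≫ (α_ A B Y).hom ≫ A ◁ (β_ B Y).hom ≫ (α_ A Y B).inv ≫ (β_ A Y).hom ▷ B =
      (β_ W Y).hom ≫ Y ◁ g ≫ (α_ Y A B).inv := by
  rw [← braiding_naturality_left_assoc, braiding_tensor_left_hom]
  simp

lemma braiding_whiskerRight_comp_whiskerLeft (Y : C) {W A B : C} (g : A ⊗ B ⟶ W) :
    (β_ A Y).hom ▷ B ≫ (α_ Y A B).hom ≫ Y ◁ g =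
      (α_ A Y B).hom ≫ A ◁ (β_ B Y).inv ≫ (α_ A B Y).inv ≫ g ▷ Y ≫ (β_ W Y).hom := by
  rw [braiding_naturality_left, braiding_tensor_left_hom]
  simp

namespace StrandClosure

variable {X Y : C}

/-- The endomorphism of `Y` obtained by letting a closed `X`-coloured loop encircle a strand
coloured by `Y`. -/
def encircle (c : StrandClosure X) (Y : C) : Y ⟶ Y :=
  c.partialTrace ((β_ Y X).hom ≫ (β_ X Y).hom)

lemma partialTrace_whiskerRight (c : StrandClosure Y) {W Z : C} (f : W ⊗ Y ⟶ Z ⊗ Y) (V : C) :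
    c.partialTrace f ▷ V =
      c.partialTrace ((α_ W V Y).hom ≫ W ◁ (β_ V Y).hom ≫ (α_ W Y V).inv ≫ f ▷ V ≫
        (α_ Z Y V).hom ≫ Z ◁ (β_ V Y).inv ≫ (α_ Z V Y).inv) := by
  have cup_past_strand :
      c.cup ▷ V = (λ_ V).hom ≫ (ρ_ V).inv ≫ V ◁ c.cup ≫ (β_ V (Y ⊗ c.returning)).hom := by
    rw [braiding_naturality_right]
    simp
  have cap_past_strand :
      c.cap ▷ V = (β_ V (Y ⊗ c.returning)).inv ≫ V ◁ c.cap ≫ (ρ_ V).hom ≫ (λ_ V).inv := by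
    rw [← braiding_inv_naturality_left_assoc]
    simp
  calc
    _ = 𝟙 _ ⊗≫ W ◁ (c.cup ▷ V) ⊗≫ f ▷ (c.returning ⊗ V) ⊗≫ Z ◁ (c.cap ▷ V) ⊗≫ 𝟙 _ := by
      unfold partialTrace; monoidal
    _ = 𝟙 _ ⊗≫ W ◁ V ◁ c.cup ⊗≫ W ◁ (β_ V Y).hom ▷ c.returning ⊗≫
          ((W ⊗ Y) ◁ (β_ V c.returning).hom ≫ f ▷ (c.returning ⊗ V) ≫
            (Z ⊗ Y) ◁ (β_ V c.returning).inv) ⊗≫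
          Z ◁ (β_ V Y).inv ▷ c.returning ⊗≫ Z ◁ V ◁ c.cap ⊗≫ 𝟙 _ := by
      rw [cup_past_strand, cap_past_strand, braiding_tensor_right_hom, braiding_tensor_right_inv]
      monoidal
    _ = 𝟙 _ ⊗≫ W ◁ V ◁ c.cup ⊗≫ W ◁ (β_ V Y).hom ▷ c.returning ⊗≫ f ▷ (V ⊗ c.returning) ⊗≫
          Z ◁ (β_ V Y).inv ▷ c.returning ⊗≫ Z ◁ V ◁ c.cap ⊗≫ 𝟙 _ := by
      rw [whisker_exchange_assoc, ← whiskerLeft_comp, Iso.hom_inv_id, whiskerLeft_id,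
        Category.comp_id]
    _ = _ := by
      unfold partialTrace; monoidal

/-- Dragging the `Y`-strand across the cup and the cap to the right of the loop turns each of its
crossings with `X` into an inverse crossing with the returning strand. -/
lemma encircle_eq_closure_left (c : StrandClosure X) (Y : C) :
    c.encircle Y = (λ_ Y).inv ≫ c.cup ▷ Y ≫ (α_ X c.returning Y).hom ≫
      X ◁ ((β_ Y c.returning).inv ≫ (β_ c.returning Y).inv) ≫ (α_ X c.returning Y).inv ≫
        c.cap ▷ Y ≫ (λ_ Y).hom := by
  have cup_slide := whiskerLeft_comp_braiding_whiskerRight Y c.cup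
  have cap_slide := braiding_whiskerRight_comp_whiskerLeft Y c.cap
  simp only [encircle, partialTrace, comp_whiskerRight, Category.assoc]
  rw [reassoc_of% cup_slide, reassoc_of% cap_slide]
  simp

lemma cup_comp_encircle_whiskerRight (cX : StrandClosure X) (cY : StrandClosure Y) :
    cX.cup ≫ cY.encircle X ▷ cX.returning =
      cX.cup ≫ X ◁ cY.partialTrace
        ((β_ Y cX.returning).inv ≫ (β_ cX.returning Y).inv) := by
  have strand_leaves_cup := whiskerRight_comp_braiding Y cX.cup
  have strand_reenters_cup := whiskerLeft_comp_braiding_whiskerRight Y cX.cup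
  rw [encircle, whiskerLeft_partialTrace, partialTrace_whiskerRight, comp_partialTrace,
    comp_partialTrace]
  simp only [comp_whiskerRight, Category.assoc]
  rw [reassoc_of% strand_leaves_cup, reassoc_of% strand_reenters_cup]
  simp

/-- Sliding the loop to the returning strand of `X` makes the two closures stand side by side,
where they can be exchanged. -/
theorem trace_encircle_comm (cX : StrandClosure X) (cY : StrandClosure Y) :
    cX.trace (cY.encircle X) = cY.trace (cX.encircle Y) := by
  have loop_slide := cup_comp_encircle_whiskerRight cX cY
  rw [encircle_eq_closure_left cX]
  unfold trace
  rw [reassoc_of% loop_slide]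
  unfold partialTrace
  generalize (β_ Y cX.returning).inv ≫ (β_ cX.returning Y).inv = m
  calc
    _ = 𝟙 _ ⊗≫ (cX.cup ▷ 𝟙_ C ≫ (X ⊗ cX.returning) ◁ cY.cup) ⊗≫ X ◁ m ▷ cY.returning ⊗≫
          ((X ⊗ cX.returning) ◁ cY.cap ≫ cX.cap ▷ 𝟙_ C) ⊗≫ 𝟙 _ := by monoidal
    _ = 𝟙 _ ⊗≫ (𝟙_ C ◁ cY.cup ≫ cX.cup ▷ (Y ⊗ cY.returning)) ⊗≫ X ◁ m ▷ cY.returning ⊗≫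
          (cX.cap ▷ (Y ⊗ cY.returning) ≫ 𝟙_ C ◁ cY.cap) ⊗≫ 𝟙 _ := by
      rw [← whisker_exchange cX.cup cY.cup, whisker_exchange cX.cap cY.cap]
    _ = _ := by monoidal

lemma comp_dim_eq_comp_dim (cX : StrandClosure X) (cY : StrandClosure Y) {s t : 𝟙_ C ⟶ 𝟙_ C}
    (hs : cX.encircle Y = smul s (𝟙 Y)) (ht : cY.encircle X = smul t (𝟙 X)) :
    s ≫ cY.dim = t ≫ cX.dim := by
  rw [← trace_smul_id, ← trace_smul_id, ← hs, ← ht, trace_encircle_comm]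

end StrandClosure

theorem statement8_general {J U V : C}
    (cJ : StrandClosure J) (cU : StrandClosure U) (cV : StrandClosure V)
    {sJU sJV sUJ sVJ : 𝟙_ C ⟶ 𝟙_ C}
    (hsJU : cJ.encircle U = smul sJU (𝟙 U)) (hsJV : cJ.encircle V = smul sJV (𝟙 V))
    (hsUJ : cU.encircle J = smul sUJ (𝟙 J)) (hsVJ : cV.encircle J = smul sVJ (𝟙 J)) :
    sUJ ≫ sJV ≫ cV.dim = sVJ ≫ sJU ≫ cU.dim :=
  calc
    sUJ ≫ sJV ≫ cV.dim = sUJ ≫ sVJ ≫ cJ.dim := by rw [cJ.comp_dim_eq_comp_dim cV hsJV hsVJ]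
    _ = sVJ ≫ sUJ ≫ cJ.dim := by
      rw [← Category.assoc, tensorUnit_comp_comm sUJ sVJ, Category.assoc]
    _ = sVJ ≫ sJU ≫ cU.dim := by rw [cJ.comp_dim_eq_comp_dim cU hsJU hsUJ]

/-- The closure of strands in a ribbon category: the coevaluation `b_V` as cup and the modified
evaluation `d'_V` as cap. -/
def Twist.strandClosure [RightRigidCategory C] (T : Twist C) (V : C) : StrandClosure V where
  returning := Vᘁ
  cup := η_ V (Vᘁ)
  cap := dP T V

end BraidedMonoidal

/-- For a simple ambidextrous `J` and simple `U, V ∈ A(J)` (i.e.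
`S'(J,U) ≠ 0 ≠ S'(J,V)`), one has
`S'(U,J)·S'(J,V)·dim(V) = S'(V,J)·S'(J,U)·dim(U)` in `K`; i.e. the modified
dimension `d_J = d₀·S'(-,J)/S'(J,-)` is proportional to `dim` on `A(J)`. -/
theorem statement8
    (hK : ∀ a b : 𝟙_ C ⟶ 𝟙_ C, a ≫ b = 0 → a = 0 ∨ b = 0)
    (J U V : C) (hJ : IsSimple J) (hamb : Ambidextrous T J)
    (hU : IsSimple U) (hV : IsSimple V)
    (sJU sJV sUJ sVJ : 𝟙_ C ⟶ 𝟙_ C)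
    (hsJU : SMap T J U = smul sJU (𝟙 U)) (hJU : sJU ≠ 0)
    (hsJV : SMap T J V = smul sJV (𝟙 V)) (hJV : sJV ≠ 0)
    (hsUJ : SMap T U J = smul sUJ (𝟙 J))
    (hsVJ : SMap T V J = smul sVJ (𝟙 J)) :
    sUJ ≫ sJV ≫ qdim T V = sVJ ≫ sJU ≫ qdim T U :=
  statement8_general (T.strandClosure J) (T.strandClosure U) (T.strandClosure V)
    hsJU hsJV hsUJ hsVJ

end RibbonPaper
end

section
/- Let J and V be simple objects of C with S'(J,V) ≠ 0. If dim(J) = 0, then dim(V) = 0. -/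
/-!
The trace of `SMap T J V` is the Hopf link with components coloured by `J` and `V`, and that link is
symmetric in its two components. When both `S'(J, V)` and `S'(V, J)` are scalars, this reads
`S'(J, V) * dim V = S'(V, J) * dim J`.

The symmetry holds in any braided category and for any cups and caps. Let `X ⊗ Y` be the loop
linking the left leg of the cup `μ : 𝟙_ C ⟶ V ⊗ W`. It slides along `μ` to the right leg, where the
double braiding becomes inverted because a cup is transparent to the braiding. It is then a loop
next to the loop `V ⊗ W`, so the roles of the two loops can be exchanged, and pulling the cup and
cap of `V ⊗ W` across the strand `X` inverts the double braiding once more.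
-/

open CategoryTheory MonoidalCategory

namespace RibbonPaper

variable {C : Type*} [Category C] [MonoidalCategory C] [BraidedCategory C]
  [Preadditive C] [MonoidalPreadditive C] [RightRigidCategory C]

variable (T : Twist C)

section PartialTrace

omit [BraidedCategory C] [Preadditive C] [MonoidalPreadditive C] [RightRigidCategory C]

/-- The partial trace of `f` closing up `X` to the right of `U`, along a cup and a cap that need
not come from a duality; `ptrR` is the case of the ribbon cup and cap. -/
def rightPartialTrace {U X Y : C} (η : 𝟙_ C ⟶ X ⊗ Y) (ε : X ⊗ Y ⟶ 𝟙_ C) (f : U ⊗ X ⟶ U ⊗ X) :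
    U ⟶ U :=
  (ρ_ U).inv ≫ U ◁ η ≫ (α_ U X Y).inv ≫ f ▷ Y ≫ (α_ U X Y).hom ≫ U ◁ ε ≫ (ρ_ U).hom

/-- The partial trace of `f` closing up `Y` to the left of `U`, along an arbitrary cup and cap. -/
def leftPartialTrace {U X Y : C} (η : 𝟙_ C ⟶ X ⊗ Y) (ε : X ⊗ Y ⟶ 𝟙_ C) (f : Y ⊗ U ⟶ Y ⊗ U) :
    U ⟶ U :=
  (λ_ U).inv ≫ η ▷ U ≫ (α_ X Y U).hom ≫ X ◁ f ≫ (α_ X Y U).inv ≫ ε ▷ U ≫ (λ_ U).hom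

theorem comp_rightPartialTrace_congr {U U' X Y : C} (η : 𝟙_ C ⟶ X ⊗ Y) (ε : X ⊗ Y ⟶ 𝟙_ C)
    (a : U' ⟶ U) {f g : U ⊗ X ⟶ U ⊗ X} (h : a ▷ X ≫ f = a ▷ X ≫ g) :
    a ≫ rightPartialTrace η ε f = a ≫ rightPartialTrace η ε g := by
  have factor (k : U ⊗ X ⟶ U ⊗ X) : a ≫ rightPartialTrace η ε k =
      (ρ_ U').inv ≫ U' ◁ η ≫ (α_ U' X Y).inv ≫ (a ▷ X ≫ k) ▷ Y ≫ (α_ U X Y).hom ≫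
        U ◁ ε ≫ (ρ_ U).hom := by
    unfold rightPartialTrace
    rw [rightUnitor_inv_naturality_assoc, ← whisker_exchange_assoc]
    simp
  rw [factor, factor, h]

theorem whiskerLeft_rightPartialTrace {U X Y : C} (V : C) (η : 𝟙_ C ⟶ X ⊗ Y) (ε : X ⊗ Y ⟶ 𝟙_ C)
    (f : U ⊗ X ⟶ U ⊗ X) :
    V ◁ rightPartialTrace η ε f =
      rightPartialTrace η ε ((α_ V U X).hom ≫ V ◁ f ≫ (α_ V U X).inv) := by
  unfold rightPartialTrace
  monoidal

theorem comp_leftPartialTrace_whiskerRight_comp {V W X Y : C} (μ : 𝟙_ C ⟶ V ⊗ W)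
    (ν : V ⊗ W ⟶ 𝟙_ C) (η : 𝟙_ C ⟶ X ⊗ Y) (ε : X ⊗ Y ⟶ 𝟙_ C) (f : Y ⊗ V ⟶ Y ⊗ V) :
    μ ≫ leftPartialTrace η ε f ▷ W ≫ ν = η ≫ X ◁ rightPartialTrace μ ν f ≫ ε := by
  unfold leftPartialTrace rightPartialTrace
  calc
    _ = 𝟙 _ ⊗≫ (𝟙_ C ◁ μ ≫ η ▷ (V ⊗ W)) ⊗≫ X ◁ f ▷ W ⊗≫
        (ε ▷ (V ⊗ W) ≫ 𝟙_ C ◁ ν) ⊗≫ 𝟙 _ := by monoidal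
    _ = 𝟙 _ ⊗≫ (η ▷ 𝟙_ C ≫ (X ⊗ Y) ◁ μ) ⊗≫ X ◁ f ▷ W ⊗≫
        ((X ⊗ Y) ◁ ν ≫ ε ▷ 𝟙_ C) ⊗≫ 𝟙 _ := by
      rw [whisker_exchange, whisker_exchange]
    _ = _ := by monoidal

end PartialTrace

section DoubleBraiding

omit [Preadditive C] [MonoidalPreadditive C] [RightRigidCategory C]

/-- The double braiding (monodromy) of `X` and `Y`, as an automorphism of `X ⊗ Y`. -/
def doubleBraiding (X Y : C) : X ⊗ Y ≅ X ⊗ Y :=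
  β_ X Y ≪≫ β_ Y X

theorem doubleBraiding_tensor_left_hom (V W X : C) :
    (doubleBraiding (V ⊗ W) X).hom =
      (α_ V W X).hom ≫ V ◁ (β_ W X).hom ≫ (α_ V X W).inv ≫ (doubleBraiding V X).hom ▷ W ≫
        (α_ V X W).hom ≫ V ◁ (β_ X W).hom ≫ (α_ V W X).inv := by
  simp [doubleBraiding]

theorem cup_whiskerRight_comp_doubleBraiding {A : C} (μ : 𝟙_ C ⟶ A) (X : C) :
    μ ▷ X ≫ (doubleBraiding A X).hom = μ ▷ X := by
  simp [doubleBraiding]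

theorem rightPartialTrace_whiskerRight {V X Y : C} (η : 𝟙_ C ⟶ X ⊗ Y) (ε : X ⊗ Y ⟶ 𝟙_ C)
    (f : V ⊗ X ⟶ V ⊗ X) (W : C) :
    rightPartialTrace η ε f ▷ W =
      rightPartialTrace η ε ((α_ V W X).hom ≫ V ◁ (β_ W X).hom ≫ (α_ V X W).inv ≫ f ▷ W ≫
        (α_ V X W).hom ≫ V ◁ (β_ W X).inv ≫ (α_ V W X).inv) := by
  have cup : η ▷ W = (λ_ W).hom ≫ (ρ_ W).inv ≫ W ◁ η ≫ (β_ W (X ⊗ Y)).hom := by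
    rw [BraidedCategory.braiding_naturality_right]
    simp
  have cap : ε ▷ W = (β_ W (X ⊗ Y)).inv ≫ W ◁ ε ≫ (ρ_ W).hom ≫ (λ_ W).inv := by
    rw [Iso.eq_inv_comp, ← BraidedCategory.braiding_naturality_right]
    simp
  unfold rightPartialTrace
  calc
    _ = 𝟙 _ ⊗≫ V ◁ η ▷ W ⊗≫ f ▷ (Y ⊗ W) ⊗≫ V ◁ ε ▷ W ⊗≫ 𝟙 _ := by monoidal
    _ = 𝟙 _ ⊗≫ V ◁ W ◁ η ⊗≫ V ◁ (β_ W X).hom ▷ Y ⊗≫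
        ((V ⊗ X) ◁ (β_ W Y).hom ≫ f ▷ (Y ⊗ W)) ⊗≫ (V ⊗ X) ◁ (β_ W Y).inv ⊗≫
        V ◁ (β_ W X).inv ▷ Y ⊗≫ V ◁ W ◁ ε ⊗≫ 𝟙 _ := by
      rw [cup, cap, BraidedCategory.braiding_tensor_right_hom,
        BraidedCategory.braiding_tensor_right_inv]
      monoidal
    _ = 𝟙 _ ⊗≫ V ◁ W ◁ η ⊗≫ V ◁ (β_ W X).hom ▷ Y ⊗≫ f ▷ (W ⊗ Y) ⊗≫
        (V ⊗ X) ◁ ((β_ W Y).hom ≫ (β_ W Y).inv) ⊗≫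
        V ◁ (β_ W X).inv ▷ Y ⊗≫ V ◁ W ◁ ε ⊗≫ 𝟙 _ := by
      rw [whisker_exchange]
      monoidal
    _ = _ := by
      rw [Iso.hom_inv_id]
      monoidal

theorem rightPartialTrace_doubleBraiding_hom {V X Y : C} (η : 𝟙_ C ⟶ X ⊗ Y) (ε : X ⊗ Y ⟶ 𝟙_ C) :
    rightPartialTrace η ε (doubleBraiding V X).hom =
      leftPartialTrace η ε (doubleBraiding Y V).inv := by
  have cup : (ρ_ V).inv ≫ V ◁ η ≫ (α_ V X Y).inv ≫ (β_ V X).hom ▷ Y =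
      (λ_ V).inv ≫ η ▷ V ≫ (α_ X Y V).hom ≫ X ◁ (β_ V Y).inv ≫ (α_ X V Y).inv := by
    have h := BraidedCategory.braiding_naturality_right V η
    rw [braiding_tensorUnit_right, BraidedCategory.braiding_tensor_right_hom] at h
    simp only [Category.assoc] at h
    rw [← cancel_mono ((α_ X V Y).hom ≫ X ◁ (β_ V Y).hom ≫ (α_ X Y V).inv)]
    simp [h]
  have cap : (β_ X V).hom ▷ Y ≫ (α_ V X Y).hom ≫ V ◁ ε ≫ (ρ_ V).hom =
      (α_ X V Y).hom ≫ X ◁ (β_ Y V).inv ≫ (α_ X Y V).inv ≫ ε ▷ V ≫ (λ_ V).hom := by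
    have h := BraidedCategory.braiding_naturality_left ε V
    rw [braiding_tensorUnit_left, BraidedCategory.braiding_tensor_left_hom] at h
    simp only [Category.assoc] at h
    rw [← cancel_epi ((α_ X Y V).hom ≫ X ◁ (β_ Y V).hom ≫ (α_ X V Y).inv),
      ← cancel_mono (ρ_ V).inv]
    simp [h]
  simp only [rightPartialTrace, leftPartialTrace, doubleBraiding, Iso.trans_hom, Iso.trans_inv,
    comp_whiskerRight, Category.assoc, cap, reassoc_of% cup]
  simp

theorem comp_rightPartialTrace_doubleBraiding_whiskerRight {V W X Y : C} (μ : 𝟙_ C ⟶ V ⊗ W)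
    (η : 𝟙_ C ⟶ X ⊗ Y) (ε : X ⊗ Y ⟶ 𝟙_ C) :
    μ ≫ rightPartialTrace η ε (doubleBraiding V X).hom ▷ W =
      μ ≫ V ◁ rightPartialTrace η ε (doubleBraiding W X).inv := by
  rw [rightPartialTrace_whiskerRight, whiskerLeft_rightPartialTrace]
  apply comp_rightPartialTrace_congr
  calc
    _ = μ ▷ X ≫ (doubleBraiding (V ⊗ W) X).hom ≫
        (α_ V W X).hom ≫ V ◁ (doubleBraiding W X).inv ≫ (α_ V W X).inv := by
      rw [doubleBraiding_tensor_left_hom]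
      simp [doubleBraiding]
    _ = _ := by rw [reassoc_of% cup_whiskerRight_comp_doubleBraiding μ X]

theorem hopfLink_comm {V W X Y : C} (μ : 𝟙_ C ⟶ V ⊗ W) (ν : V ⊗ W ⟶ 𝟙_ C)
    (η : 𝟙_ C ⟶ X ⊗ Y) (ε : X ⊗ Y ⟶ 𝟙_ C) :
    μ ≫ rightPartialTrace η ε (doubleBraiding V X).hom ▷ W ≫ ν =
      η ≫ rightPartialTrace μ ν (doubleBraiding X V).hom ▷ Y ≫ ε := by
  rw [reassoc_of% comp_rightPartialTrace_doubleBraiding_whiskerRight μ η ε,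
    ← comp_leftPartialTrace_whiskerRight_comp, ← rightPartialTrace_doubleBraiding_hom]

end DoubleBraiding

section QuantumDimension

omit [Preadditive C] [MonoidalPreadditive C]

theorem trC_smul_id (k : 𝟙_ C ⟶ 𝟙_ C) (V : C) : trC T (smul k (𝟙 V)) = k ≫ qdim T V := by
  unfold qdim trC smul
  calc
    _ = 𝟙 _ ⊗≫ (𝟙_ C ◁ η_ V Vᘁ ≫ k ▷ (V ⊗ Vᘁ)) ⊗≫ dP T V := by
      rw [tensorHom_id]
      monoidal
    _ = _ := by
      rw [whisker_exchange]
      monoidal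

theorem trC_SMap_comm (X Y : C) : trC T (SMap T X Y) = trC T (SMap T Y X) :=
  hopfLink_comm (η_ Y Yᘁ) (dP T Y) (η_ X Xᘁ) (dP T X)

theorem comp_qdim_eq_comp_qdim {X Y : C} {s t : 𝟙_ C ⟶ 𝟙_ C} (hs : SMap T X Y = smul s (𝟙 Y))
    (ht : SMap T Y X = smul t (𝟙 X)) : s ≫ qdim T Y = t ≫ qdim T X := by
  rw [← trC_smul_id, ← trC_smul_id, ← hs, ← ht, trC_SMap_comm]

theorem statement9_general [Limits.HasZeroMorphisms C] {J V : C} {s t : 𝟙_ C ⟶ 𝟙_ C}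
    (hs : SMap T J V = smul s (𝟙 V)) (ht : SMap T V J = smul t (𝟙 J))
    (hcancel : ∀ a : 𝟙_ C ⟶ 𝟙_ C, s ≫ a = 0 → a = 0) (hdimJ : qdim T J = 0) :
    qdim T V = 0 :=
  hcancel _ <| by rw [comp_qdim_eq_comp_qdim T hs ht, hdimJ, Limits.comp_zero]

end QuantumDimension

/-- If `J, V` are simple with `S'(J,V) ≠ 0` and `dim(J) = 0`, then
`dim(V) = 0`. (The ground ring `K = End(𝟙)` is assumed to be an integral
domain.) -/
theorem statement9
    (hK : ∀ a b : 𝟙_ C ⟶ 𝟙_ C, a ≫ b = 0 → a = 0 ∨ b = 0)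
    (J V : C) (hJ : IsSimple J) (hV : IsSimple V)
    (sJV : 𝟙_ C ⟶ 𝟙_ C) (hsJV : SMap T J V = smul sJV (𝟙 V)) (hne : sJV ≠ 0)
    (hdimJ : qdim T J = 0) :
    qdim T V = 0 := by
  obtain ⟨t, ht⟩ := hJ (SMap T V J)
  exact statement9_general T hsJV ht (fun a h ↦ (hK sJV a h).resolve_left hne) hdimJ

end RibbonPaper
end
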